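/- arXiv:2512.14605 — 7 statements merged into one kernel-verified Lean document; each statement's English description precedes it below -/
import Mathlib

section
/- For all odd natural numbers k and l, the derivations D_k and D_l commute: for every polynomial P in R one has D_k(D_l(P)) = D_l(D_k(P)) (equivalently, the commutator [D_k, D_l] is the zero operator on R). -/
open MvPolynomial Finset

noncomputable section

/-- The polynomial ring `R = ℂ[b_{i,2j-1} : i ∈ {1,2,3}, j ≥ 1]`. -/
abbrev R : Type := MvPolynomial (Fin 3 × ℕ+) ℂ

/-- `b i j` denotes the variable `b_{i+1, j}`, intended for odd `j ≥ 1`;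
the variable `b_{i+1, 2m-1}` is `X (i, m)`. -/
def b (i : Fin 3) (j : ℕ) : R := MvPolynomial.X (i, ⟨j / 2 + 1, Nat.succ_pos _⟩)

/-- The derivation `D_1`, determined by its values on the variables. -/
def D1 : Derivation ℂ R R :=
  MvPolynomial.mkDerivation ℂ fun p =>
    let j : ℕ := 2 * (p.2 : ℕ) - 1
    if p.1 = 0 then b 1 j
    else if p.1 = 1 then b 2 j
    else 4 * (2 * b 0 1 * b 1 j + b 1 1 * b 0 j + b 1 (j + 2))

/-- The value of `D_k` on the variable `b_{1,j}` (for odd `k`, `j`). -/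
def DB1 (k j : ℕ) : R :=
  b 1 (j + k - 1) + ∑ s ∈ Finset.Icc 1 ((k - 1) / 2),
    (b 1 (2 * s - 1) * b 0 (j + k - 2 * s - 1) - b 0 (2 * s - 1) * b 1 (j + k - 2 * s - 1))

/-- The derivation `D_k` (intended for odd `k`), determined by
`D_k(b_{1,j}) = DB1 k j`, `D_k(b_{2,j}) = D_1(D_k(b_{1,j}))`, `D_k(b_{3,j}) = D_1(D_k(b_{2,j}))`. -/
def D (k : ℕ) : Derivation ℂ R R :=
  MvPolynomial.mkDerivation ℂ fun p =>
    let j : ℕ := 2 * (p.2 : ℕ) - 1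
    if p.1 = 0 then DB1 k j
    else if p.1 = 1 then D1 (DB1 k j)
    else D1 (D1 (DB1 k j))

end

set_option linter.unusedSectionVars false
set_option linter.unusedSimpArgs false
set_option linter.unusedVariables false

section Abstract

open PowerSeries

variable {A : Type*} [CommRing A] [IsDomain A] [Algebra ℂ A]

/-- First factor embedded: power series in `x`. -/
theorem relG (a : ℕ → A) (G f : ℕ → ℕ → A)
    (hz : ∀ K, G K 0 = 0) (h0 : ∀ n, G 0 n = f 0 n)
    (hs : ∀ K n, G (K + 1) n = G K (n + 1) + f (K + 1) n) :
    ((PowerSeries.X : A⟦X⟧⟦X⟧) - PowerSeries.C PowerSeries.X) * PowerSeries.mk (fun n => PowerSeries.mk fun K => G K n)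
      = PowerSeries.X * PowerSeries.mk (fun n => PowerSeries.mk fun K => f K n) := by
  ext n K
  rcases n with _ | n
  · rcases K with _ | K <;> simp [sub_mul, PowerSeries.coeff_C_mul, PowerSeries.coeff_succ_X_mul, hz]
  · rcases K with _ | K
    · simp [sub_mul, PowerSeries.coeff_C_mul, PowerSeries.coeff_succ_X_mul, h0]
    · simp [sub_mul, PowerSeries.coeff_C_mul, PowerSeries.coeff_succ_X_mul, hs]

/-- Series in the inner variable. -/
noncomputable def ix (f : ℕ → A) : A⟦X⟧⟦X⟧ := PowerSeries.C (PowerSeries.mk f)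
/-- Series in the outer variable. -/
noncomputable def iy (f : ℕ → A) : A⟦X⟧⟦X⟧ := PowerSeries.mk fun n => PowerSeries.C (f n)
/-- Double series. -/
noncomputable def dbl (G : ℕ → ℕ → A) : A⟦X⟧⟦X⟧ :=
  PowerSeries.mk (fun n => PowerSeries.mk fun K => G K n)

theorem dbl_mul (f g : ℕ → A) : dbl (fun K n => f K * g n) = ix f * iy g := by
  ext n K
  simp [dbl, ix, iy, PowerSeries.coeff_C_mul, PowerSeries.coeff_mul_C]

theorem dbl_add (f g : ℕ → ℕ → A) :
    dbl (fun K n => f K n + g K n) = dbl f + dbl g := by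
  ext n K
  simp [dbl]

theorem dbl_sub (f g : ℕ → ℕ → A) :
    dbl (fun K n => f K n - g K n) = dbl f - dbl g := by
  ext n K
  simp [dbl]

theorem relG' (G f : ℕ → ℕ → A)
    (hz : ∀ K, G K 0 = 0) (h0 : ∀ n, G 0 n = f 0 n)
    (hs : ∀ K n, G (K + 1) n = G K (n + 1) + f (K + 1) n) :
    ((PowerSeries.X : A⟦X⟧⟦X⟧) - PowerSeries.C PowerSeries.X) * dbl G = PowerSeries.X * dbl f := relG (fun _ => 0) G f hz h0 hs

variable (a : ℕ → A) (d : Derivation ℂ A A) (Δ : ℕ → Derivation ℂ A A)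

theorem third (h0 : a 0 = -1)
    (hG0 : ∀ n, Δ 0 (a n) = d (a 0) * a n - a 0 * d (a n))
    (hGs : ∀ K n, Δ (K + 1) (a n) = Δ K (a (n + 1)) + (d (a (K + 1)) * a n - a (K + 1) * d (a n)))
    (hd3 : ∀ n, d (d (d (a n))) = 4 * (2 * a 1 * d (a n) + d (a 1) * a n + d (a (n + 1))))
    (hc1 : ∀ K n, Δ K (d (a n)) = d (Δ K (a n))) (K n : ℕ) :
    Δ K (d (d (d (a n)))) = d (d (d (Δ K (a n)))) := by
  have hda0 : d (a 0) = 0 := by rw [h0]; simp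
  have hΔa0 : ∀ K, Δ K (a 0) = 0 := by intro K; rw [h0]; simp
  have hΔa1 : ∀ K, Δ K (a 1) = d (a (K + 1)) := by
    intro K
    have := hGs K 0
    rw [hΔa0, hda0, h0] at this
    linear_combination -this
  have r0 := relG' (fun K n => Δ K (a n)) (fun K n => d (a K) * a n - a K * d (a n)) hΔa0 hG0 hGs
  have r1 := relG' (fun K n => d (Δ K (a n))) (fun K n => d (d (a K)) * a n - a K * d (d (a n)))
    (by simp [hΔa0]) (by intro n; rw [hG0]; simp; ring) (by intro K n; rw [hGs]; simp; ring)
  have r3 := relG' (fun K n => d (d (d (Δ K (a n)))))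
    (fun K n => ((d (d (d (d (a K)))) * a n + 2 * (d (d (d (a K))) * d (a n)))
      - 2 * (d (a K) * d (d (d (a n))))) - a K * d (d (d (d (a n)))))
    (by simp [hΔa0]) (by intro n; rw [hG0]; simp; ring) (by intro K n; rw [hGs]; simp; ring)
  have e2 : ∀ f : ℕ → ℕ → A, dbl (fun K n => 2 * f K n) = 2 * dbl f := by
    intro f
    simp only [two_mul, dbl_add]
  simp only [dbl_sub, dbl_add, dbl_mul, e2] at r0 r1 r3
  set x : A⟦X⟧⟦X⟧ := PowerSeries.C PowerSeries.X with hx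
  set y : A⟦X⟧⟦X⟧ := PowerSeries.X with hy
  have n2 : (PowerSeries.C (PowerSeries.C (2 : A)) : A⟦X⟧⟦X⟧) = 2 := by rw [map_ofNat, map_ofNat]
  have n3 : (PowerSeries.C (PowerSeries.C (3 : A)) : A⟦X⟧⟦X⟧) = 3 := by rw [map_ofNat, map_ofNat]
  have n4 : (PowerSeries.C (PowerSeries.C (4 : A)) : A⟦X⟧⟦X⟧) = 4 := by rw [map_ofNat, map_ofNat]
  set c : A → A⟦X⟧⟦X⟧ := fun t => PowerSeries.C (PowerSeries.C t) with hc
  have bx3 : x * ix (fun n => d (d (d (a n)))) = 4 * (2 * c (a 1) * (x * ix (fun n => d (a n)))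
      + c (d (a 1)) * (x * ix a) + ix (fun n => d (a n))) := by
    have : (PowerSeries.X : A⟦X⟧) * PowerSeries.mk (fun n => d (d (d (a n)))) =
        PowerSeries.C 4 * (PowerSeries.C 2 * PowerSeries.C (a 1) * (PowerSeries.X * PowerSeries.mk (fun n => d (a n)))
        + PowerSeries.C (d (a 1)) * (PowerSeries.X * PowerSeries.mk a) + PowerSeries.mk (fun n => d (a n))) := by
      ext n
      rcases n with _ | n
      · simp [hda0]
      · simp only [PowerSeries.coeff_succ_X_mul, PowerSeries.coeff_mk, PowerSeries.coeff_C_mul, map_add, mul_assoc, hd3]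
    simpa [ix, hx, hc, n2, n3, n4] using congrArg (PowerSeries.C : A⟦X⟧ → A⟦X⟧⟦X⟧) this
  have by3 : y * iy (fun n => d (d (d (a n)))) = 4 * (2 * c (a 1) * (y * iy (fun n => d (a n)))
      + c (d (a 1)) * (y * iy a) + iy (fun n => d (a n))) := by
    have : y * iy (fun n => d (d (d (a n)))) =
        PowerSeries.C (PowerSeries.C 4) * (PowerSeries.C (PowerSeries.C 2) * c (a 1) * (y * iy (fun n => d (a n)))
        + c (d (a 1)) * (y * iy a) + iy (fun n => d (a n))) := by
      ext n : 1
      rcases n with _ | n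
      · simp [hda0, iy, hy, hc, mul_assoc, PowerSeries.coeff_C_mul]
      · simp only [iy, hy, hc, PowerSeries.coeff_succ_X_mul, PowerSeries.coeff_mk, PowerSeries.coeff_C_mul, map_add, mul_assoc, hd3,
          map_mul]
    simpa only [n2, n3, n4] using this
  have hd4 : ∀ n, d (d (d (d (a n)))) = 4 * (3 * d (a 1) * d (a n) + 2 * a 1 * d (d (a n))
      + d (d (a 1)) * a n + d (d (a (n + 1)))) := by
    intro n
    have h4 : d (4 : A) = 0 := by simpa using d.map_natCast 4
    have h2 : d (2 : A) = 0 := by simpa using d.map_natCast 2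
    rw [hd3]
    simp [h4, h2]
    left
    ring
  have bx4 : x * ix (fun n => d (d (d (d (a n))))) = 4 * (3 * c (d (a 1)) * (x * ix (fun n => d (a n)))
      + 2 * c (a 1) * (x * ix (fun n => d (d (a n))))
      + c (d (d (a 1))) * (x * ix a) + ix (fun n => d (d (a n)))) := by
    have : (PowerSeries.X : A⟦X⟧) * PowerSeries.mk (fun n => d (d (d (d (a n))))) =
        PowerSeries.C 4 * (PowerSeries.C 3 * PowerSeries.C (d (a 1)) * (PowerSeries.X * PowerSeries.mk (fun n => d (a n)))
        + PowerSeries.C 2 * PowerSeries.C (a 1) * (PowerSeries.X * PowerSeries.mk (fun n => d (d (a n))))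
        + PowerSeries.C (d (d (a 1))) * (PowerSeries.X * PowerSeries.mk a) + PowerSeries.mk (fun n => d (d (a n)))) := by
      ext n
      rcases n with _ | n
      · simp [hda0]
      · simp only [PowerSeries.coeff_succ_X_mul, PowerSeries.coeff_mk, PowerSeries.coeff_C_mul, map_add, mul_assoc, hd4]
    simpa [ix, hx, hc, n2, n3, n4] using congrArg (PowerSeries.C : A⟦X⟧ → A⟦X⟧⟦X⟧) this
  have by4 : y * iy (fun n => d (d (d (d (a n))))) = 4 * (3 * c (d (a 1)) * (y * iy (fun n => d (a n)))
      + 2 * c (a 1) * (y * iy (fun n => d (d (a n))))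
      + c (d (d (a 1))) * (y * iy a) + iy (fun n => d (d (a n)))) := by
    have : y * iy (fun n => d (d (d (d (a n))))) =
        PowerSeries.C (PowerSeries.C 4) * (PowerSeries.C (PowerSeries.C 3) * c (d (a 1)) * (y * iy (fun n => d (a n)))
        + PowerSeries.C (PowerSeries.C 2) * c (a 1) * (y * iy (fun n => d (d (a n))))
        + c (d (d (a 1))) * (y * iy a) + iy (fun n => d (d (a n)))) := by
      ext n : 1
      rcases n with _ | n
      · simp [hda0, iy, hy, hc, mul_assoc, PowerSeries.coeff_C_mul]
      · simp only [iy, hy, hc, PowerSeries.coeff_succ_X_mul, PowerSeries.coeff_mk, PowerSeries.coeff_C_mul, map_add, mul_assoc, hd4,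
          map_mul]
    simpa only [n2, n3, n4] using this
  have hg1 : x * ix (fun K => Δ K (a 1)) = ix (fun n => d (a n)) := by
    have : (PowerSeries.X : A⟦X⟧) * PowerSeries.mk (fun K => Δ K (a 1)) = PowerSeries.mk (fun n => d (a n)) := by
      ext n
      rcases n with _ | n
      · simp [hda0]
      · simp [PowerSeries.coeff_succ_X_mul, hΔa1]
    simpa [ix, hx] using congrArg (PowerSeries.C : A⟦X⟧ → A⟦X⟧⟦X⟧) this
  have hg2 : x * ix (fun K => d (Δ K (a 1))) = ix (fun n => d (d (a n))) := by
    have : (PowerSeries.X : A⟦X⟧) * PowerSeries.mk (fun K => d (Δ K (a 1)))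
        = PowerSeries.mk (fun n => d (d (a n))) := by
      ext n
      rcases n with _ | n
      · simp [hda0]
      · simp [PowerSeries.coeff_succ_X_mul, hΔa1]
    simpa [ix, hx] using congrArg (PowerSeries.C : A⟦X⟧ → A⟦X⟧⟦X⟧) this
  have t1 : y * dbl (fun K n => Δ K (d (d (d (a n))))) =
      4 * (2 * c (a 1) * (y * dbl (fun K n => d (Δ K (a n))))
        + 2 * (y * (ix (fun K => Δ K (a 1)) * iy (fun n => d (a n))))
        + c (d (a 1)) * (y * dbl (fun K n => Δ K (a n)))
        + y * (ix (fun K => d (Δ K (a 1))) * iy a)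
        + dbl (fun K n => d (Δ K (a n)))) := by
    have h4 : ∀ K, Δ K (4 : A) = 0 := fun K => by simpa using (Δ K).map_natCast 4
    have h2 : ∀ K, Δ K (2 : A) = 0 := fun K => by simpa using (Δ K).map_natCast 2
    have : y * dbl (fun K n => Δ K (d (d (d (a n))))) =
      PowerSeries.C (PowerSeries.C 4) * (PowerSeries.C (PowerSeries.C 2) * (c (a 1) * (y * dbl (fun K n => d (Δ K (a n)))))
        + PowerSeries.C (PowerSeries.C 2) * (y * (ix (fun K => Δ K (a 1)) * iy (fun n => d (a n))))
        + c (d (a 1)) * (y * dbl (fun K n => Δ K (a n)))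
        + y * (ix (fun K => d (Δ K (a 1))) * iy a)
        + dbl (fun K n => d (Δ K (a n)))) := by
      simp only [← dbl_mul]
      ext n K
      rcases n with _ | n
      · simp [dbl, hy, hc, PowerSeries.coeff_C_mul, hΔa0]
      · simp only [dbl, hy, hc, PowerSeries.coeff_succ_X_mul, PowerSeries.coeff_mk, PowerSeries.coeff_C_mul, map_add]
        rw [hd3]
        simp [h4, h2, hc1]
        left
        ring
    rw [this, n2, n4]
    ring
  have hx0 : x ≠ 0 := by
    rw [hx]; exact (map_ne_zero_iff _ (PowerSeries.C_injective)).2 PowerSeries.X_ne_zero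
  have hy0 : y ≠ 0 := PowerSeries.X_ne_zero
  have hyx : y - x ≠ 0 := by
    intro h
    have := congrArg (PowerSeries.coeff 1) h
    rw [hy, hx] at this
    simp [PowerSeries.coeff_C] at this
  have key : dbl (fun K n => Δ K (d (d (d (a n))))) = dbl (fun K n => d (d (d (Δ K (a n))))) := by
    apply mul_left_cancel₀ (mul_ne_zero (mul_ne_zero hx0 hy0) hyx)
    linear_combination x * (y - x) * t1 - x * y * r3
      + 4 * x * (2 * c (a 1) * y + 1) * r1 + 4 * x * y * c (d (a 1)) * r0
      + 8 * (y - x) * y * iy (fun n => d (a n)) * hg1 + 4 * (y - x) * y * iy a * hg2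
      - y * y * iy a * bx4 - 2 * y * y * iy (fun n => d (a n)) * bx3
      + 2 * x * y * ix (fun n => d (a n)) * by3 + x * y * ix a * by4
  have := congrArg (fun s => PowerSeries.coeff K (PowerSeries.coeff n s)) key
  simpa [dbl] using this

/-- Triple series. -/
noncomputable def trp (H : ℕ → ℕ → ℕ → A) : A⟦X⟧⟦X⟧⟦X⟧ :=
  PowerSeries.mk fun n => PowerSeries.mk fun L => PowerSeries.mk fun K => H K L n

theorem comm_a (h0 : a 0 = -1)
    (hG0 : ∀ n, Δ 0 (a n) = d (a 0) * a n - a 0 * d (a n))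
    (hGs : ∀ K n, Δ (K + 1) (a n) = Δ K (a (n + 1)) + (d (a (K + 1)) * a n - a (K + 1) * d (a n)))
    (hc1 : ∀ K n, Δ K (d (a n)) = d (Δ K (a n))) (K L n : ℕ) :
    Δ K (Δ L (a n)) = Δ L (Δ K (a n)) := by
  have hΔa0 : ∀ K, Δ K (a 0) = 0 := by intro K; rw [h0]; simp
  have r0 := relG' (fun K n => Δ K (a n)) (fun K n => d (a K) * a n - a K * d (a n)) hΔa0 hG0 hGs
  have r1 := relG' (fun K n => d (Δ K (a n))) (fun K n => d (d (a K)) * a n - a K * d (d (a n)))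
    (by simp [hΔa0]) (by intro n; rw [hG0]; simp; ring) (by intro K n; rw [hGs]; simp; ring)
  simp only [dbl_sub, dbl_add, dbl_mul] at r0 r1
  set x : A⟦X⟧⟦X⟧⟦X⟧ := PowerSeries.C (PowerSeries.C PowerSeries.X) with hx
  set z : A⟦X⟧⟦X⟧⟦X⟧ := PowerSeries.C PowerSeries.X with hz
  set y : A⟦X⟧⟦X⟧⟦X⟧ := PowerSeries.X with hy
  -- embeddings of series in two variables (inner, outer)
  let exz : A⟦X⟧⟦X⟧ →+* A⟦X⟧⟦X⟧⟦X⟧ := PowerSeries.C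
  let exy : A⟦X⟧⟦X⟧ →+* A⟦X⟧⟦X⟧⟦X⟧ := PowerSeries.map PowerSeries.C
  let ezy : A⟦X⟧⟦X⟧ →+* A⟦X⟧⟦X⟧⟦X⟧ := PowerSeries.map (PowerSeries.map PowerSeries.C)
  let jx : (ℕ → A) → A⟦X⟧⟦X⟧⟦X⟧ := fun f => PowerSeries.C (PowerSeries.C (PowerSeries.mk f))
  let jz : (ℕ → A) → A⟦X⟧⟦X⟧⟦X⟧ := fun f => PowerSeries.C (PowerSeries.mk fun n => PowerSeries.C (f n))
  let jy : (ℕ → A) → A⟦X⟧⟦X⟧⟦X⟧ := fun f => PowerSeries.mk fun n => PowerSeries.C (PowerSeries.C (f n))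
  have xz0 := congrArg exz r0
  have xz1 := congrArg exz r1
  have xy0 := congrArg exy r0
  have xy1 := congrArg exy r1
  have zy0 := congrArg ezy r0
  have zy1 := congrArg ezy r1
  have f1 : exz PowerSeries.X = z := rfl
  have f2 : exz (PowerSeries.C PowerSeries.X) = x := rfl
  have f3 : ∀ f, exz (ix f) = jx f := fun f => rfl
  have f4 : ∀ f, exz (iy f) = jz f := fun f => rfl
  have g1 : exy PowerSeries.X = y := by simp [exy, hy]
  have g2 : exy (PowerSeries.C PowerSeries.X) = x := by simp [exy, hx]
  have g3 : ∀ f, exy (ix f) = jx f := fun f => by simp [exy, ix, jx]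
  have g4 : ∀ f, exy (iy f) = jy f := fun f => by ext; simp [exy, iy, jy]
  have k1 : ezy PowerSeries.X = y := by simp [ezy, hy]
  have k2 : ezy (PowerSeries.C PowerSeries.X) = z := by simp [ezy, hz]
  have k3 : ∀ f, ezy (ix f) = jz f := fun f => by
    simp only [ezy, ix, jz, PowerSeries.map_C]
    congr 1
  have k4 : ∀ f, ezy (iy f) = jy f := fun f => by
    ext n : 1
    simp [ezy, iy, jy]
  simp only [map_mul, map_sub, f1, f2, f3, f4] at xz0 xz1
  simp only [map_mul, map_sub, g1, g2, g3, g4] at xy0 xy1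
  simp only [map_mul, map_sub, k1, k2, k3, k4] at zy0 zy1
  have H1 : (y - z) * trp (fun K L n => Δ K (Δ L (a n))) = y *
      (exz (dbl fun K n => d (Δ K (a n))) * jy a + jz (fun n => d (a n)) * exy (dbl fun K n => Δ K (a n))
       - exz (dbl fun K n => Δ K (a n)) * jy (fun n => d (a n))
       - jz a * exy (dbl fun K n => d (Δ K (a n)))) := by
    ext n L K
    rcases n with _ | n
    · rcases L with _ | L <;>
      simp [trp, hy, hz, sub_mul, PowerSeries.coeff_C_mul, PowerSeries.coeff_succ_X_mul, hΔa0]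
    · rcases L with _ | L
      · simp [trp, hy, hz, sub_mul, PowerSeries.coeff_C_mul, PowerSeries.coeff_mul_C, PowerSeries.coeff_succ_X_mul, exz, exy, jy, jz, dbl, hG0, hc1]
        ring
      · simp [trp, hy, hz, sub_mul, PowerSeries.coeff_C_mul, PowerSeries.coeff_mul_C, PowerSeries.coeff_succ_X_mul, exz, exy, jy, jz, dbl, hGs L, hc1]
        ring
  -- series with the roles of `x` and `z` exchanged
  let T : (ℕ → ℕ → A) → A⟦X⟧⟦X⟧⟦X⟧ := fun G =>
    PowerSeries.C (PowerSeries.mk fun L => PowerSeries.mk fun K => G L K)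
  have H2 : (y - x) * trp (fun K L n => Δ L (Δ K (a n))) = y *
      (T (fun K n => d (Δ K (a n))) * jy a + jx (fun n => d (a n)) * ezy (dbl fun K n => Δ K (a n))
       - T (fun K n => Δ K (a n)) * jy (fun n => d (a n))
       - jx a * ezy (dbl fun K n => d (Δ K (a n)))) := by
    ext n L K
    rcases n with _ | n
    · rcases K with _ | K <;>
      simp [trp, hy, hx, sub_mul, PowerSeries.coeff_C_mul, PowerSeries.coeff_succ_X_mul, hΔa0]
    · rcases K with _ | K
      · simp [trp, hy, hx, sub_mul, PowerSeries.coeff_C_mul, PowerSeries.coeff_mul_C, PowerSeries.coeff_succ_X_mul, ezy, jy, jx, T, dbl, hG0, hc1]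
        ring
      · simp [trp, hy, hx, sub_mul, PowerSeries.coeff_C_mul, PowerSeries.coeff_mul_C, PowerSeries.coeff_succ_X_mul, ezy, jy, jx, T, dbl, hGs K, hc1]
        ring
  have relT : ∀ (G f g p q : ℕ → A) (G : ℕ → ℕ → A) (_ : ∀ K, G K 0 = 0)
      (_ : ∀ n, G 0 n = f 0 * g n - p 0 * q n)
      (_ : ∀ K n, G (K + 1) n = G K (n + 1) + (f (K + 1) * g n - p (K + 1) * q n)),
      (x - z) * T G = x * (jz f * jx g - jz p * jx q) := by
    intro _ f g p q G hz0 h0 hs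
    ext n L K
    simp only [T, jz, jx, hx, hz, ← map_mul, ← map_sub]
    simp only [PowerSeries.coeff_C]
    split_ifs
    · rcases K with _ | K
      · rcases L with _ | L <;>
        simp [sub_mul, PowerSeries.coeff_C_mul, PowerSeries.coeff_mul_C, PowerSeries.coeff_succ_X_mul, hz0]
      · rcases L with _ | L <;>
        simp [sub_mul, PowerSeries.coeff_C_mul, PowerSeries.coeff_mul_C, PowerSeries.coeff_succ_X_mul, h0, hs]
    · simp
  have zx0 := relT a (fun n => d (a n)) a a (fun n => d (a n)) (fun K n => Δ K (a n)) hΔa0 hG0 hGs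
  have zx1 := relT a (fun n => d (d (a n))) a a (fun n => d (d (a n))) (fun K n => d (Δ K (a n)))
    (by simp [hΔa0]) (by intro n; rw [hG0]; simp; ring) (by intro K n; rw [hGs]; simp; ring)
  have hzx : z - x ≠ 0 := by
    intro h
    have := congrArg (fun s => PowerSeries.coeff 1 (PowerSeries.coeff 0 s)) h
    rw [hz, hx] at this
    simp [PowerSeries.coeff_C] at this
  have hyx : y - x ≠ 0 := by
    intro h
    have := congrArg (PowerSeries.coeff 1) h
    rw [hy, hx] at this
    simp [PowerSeries.coeff_C] at this
  have hyz : y - z ≠ 0 := by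
    intro h
    have := congrArg (PowerSeries.coeff 1) h
    rw [hy, hz] at this
    simp [PowerSeries.coeff_C] at this
  have key : trp (fun K L n => Δ K (Δ L (a n))) = trp (fun K L n => Δ L (Δ K (a n))) := by
    apply mul_left_cancel₀ (mul_ne_zero (mul_ne_zero hyx hyz) hzx)
    linear_combination (y - x) * (z - x) * H1 - (y - z) * (z - x) * H2
      + y * (y - x) * (jy a * xz1 - jy (fun n => d (a n)) * xz0)
      + y * (z - x) * (jz (fun n => d (a n)) * xy0 - jz a * xy1)
      + y * (y - z) * (jy a * zx1 - jy (fun n => d (a n)) * zx0)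
      - y * (z - x) * (jx (fun n => d (a n)) * zy0 - jx a * zy1)
  have := congrArg (fun s => PowerSeries.coeff K (PowerSeries.coeff L (PowerSeries.coeff n s))) key
  simpa [trp] using this

end Abstract

/-- The extended sequence `-1, b_{1,1}, b_{1,3}, ...`. -/
noncomputable def sa : ℕ → R
  | 0 => -1
  | n + 1 => MvPolynomial.X (0, ⟨n + 1, n.succ_pos⟩)

theorem b_odd (i : Fin 3) (j n : ℕ) (h : j = 2 * n + 1) :
    b i j = MvPolynomial.X (i, ⟨n + 1, n.succ_pos⟩) := by
  subst h
  unfold b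
  congr 3
  omega

theorem jj (n : ℕ) : 2 * (((⟨n + 1, n.succ_pos⟩ : ℕ+)) : ℕ) - 1 = 2 * n + 1 := by
  simp only [PNat.mk_coe]; omega

theorem D1_0 (n : ℕ) : D1 (MvPolynomial.X (0, ⟨n + 1, n.succ_pos⟩))
    = MvPolynomial.X (1, ⟨n + 1, n.succ_pos⟩) := by
  rw [D1, mkDerivation_X]
  simp only [jj, if_true]
  exact b_odd _ _ _ rfl

theorem D1_1 (n : ℕ) : D1 (MvPolynomial.X (1, ⟨n + 1, n.succ_pos⟩))
    = MvPolynomial.X (2, ⟨n + 1, n.succ_pos⟩) := by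
  rw [D1, mkDerivation_X]
  simp only [jj]
  rw [if_neg (by decide), if_pos trivial]
  exact b_odd _ _ _ rfl

theorem b0 (j n : ℕ) (h : j = 2 * n + 1) : b 0 j = sa (n + 1) := b_odd _ _ _ h
theorem b1 (j n : ℕ) (h : j = 2 * n + 1) : b 1 j = D1 (sa (n + 1)) := by
  rw [b_odd _ _ _ h, sa, D1_0]
theorem b2 (n : ℕ) : MvPolynomial.X (2, ⟨n + 1, n.succ_pos⟩) = D1 (D1 (sa (n + 1))) := by
  rw [sa, D1_0, D1_1]

theorem D1_2 (n : ℕ) : D1 (D1 (D1 (sa n))) =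
    4 * (2 * sa 1 * D1 (sa n) + D1 (sa 1) * sa n + D1 (sa (n + 1))) := by
  rcases n with _ | n
  · simp [sa]
  · rw [← b2]
    conv_lhs => rw [D1, mkDerivation_X]
    simp only [jj]
    rw [if_neg (by decide), if_neg (by decide)]
    change 4 * (2 * b 0 1 * b 1 (2 * n + 1) + b 1 1 * b 0 (2 * n + 1) + b 1 (2 * n + 1 + 2)) = _
    rw [b0 1 0 rfl, b1 _ n rfl, b1 1 0 rfl, b0 _ n rfl,
      b1 _ (n + 1) (by ring)]

theorem DB1_eq (K n : ℕ) : DB1 (2 * K + 1) (2 * n + 1) =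
    ∑ t ∈ range (K + 1), (D1 (sa t) * sa (n + 1 + K - t) - sa t * D1 (sa (n + 1 + K - t))) := by
  rw [DB1, Finset.sum_range_succ', b1 _ (n + K) (by omega), add_comm]
  congr 1
  · rw [show (2 * K + 1 - 1) / 2 = K by omega, ← Finset.Ico_succ_right_eq_Icc,
      Finset.sum_Ico_eq_sum_range]
    refine Finset.sum_congr (by simp) fun t ht => ?_
    have ht : t < K := by simpa using ht
    rw [b1 _ t (by omega), b0 _ (n + K - (t + 1)) (by omega), b0 _ t (by omega),
      b1 _ (n + K - (t + 1)) (by omega)]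
    rw [show n + K - (t + 1) + 1 = n + 1 + K - (t + 1) by omega]
  · simp only [sa, Nat.sub_zero, map_neg]
    rw [show n + 1 + K = n + K + 1 by omega]
    simp

theorem D_a (K n : ℕ) : D (2 * K + 1) (sa n) =
    ∑ t ∈ range (K + 1), (D1 (sa t) * sa (n + K - t) - sa t * D1 (sa (n + K - t))) := by
  rcases n with _ | n
  · rw [sa]
    have h := Finset.sum_range_reflect
      (fun t => D1 (sa t) * sa (K - t) - sa t * D1 (sa (K - t))) (K + 1)
    have h2 : ∑ t ∈ range (K + 1), (D1 (sa (K + 1 - 1 - t)) * sa (K - (K + 1 - 1 - t))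
          - sa (K + 1 - 1 - t) * D1 (sa (K - (K + 1 - 1 - t))))
        = - ∑ t ∈ range (K + 1), (D1 (sa t) * sa (K - t) - sa t * D1 (sa (K - t))) := by
      rw [← Finset.sum_neg_distrib]
      refine Finset.sum_congr rfl fun t ht => ?_
      have ht : t < K + 1 := by simpa using ht
      rw [show K - (K + 1 - 1 - t) = t by omega, show K + 1 - 1 - t = K - t by omega]
      ring
    rw [h2] at h
    simp only [zero_add]
    rw [self_eq_neg.1 h.symm]
    simp
  · rw [← DB1_eq, sa, D, mkDerivation_X]
    simp only [if_true]
    rfl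

theorem D_a1 (K n : ℕ) : D (2 * K + 1) (D1 (sa n)) = D1 (D (2 * K + 1) (sa n)) := by
  rcases n with _ | n
  · simp [sa]
  · rw [D_a, ← DB1_eq, sa, D1_0, D, mkDerivation_X]
    simp only []
    rw [if_neg (by decide), if_pos trivial]
    rfl

theorem D_a2 (K n : ℕ) :
    D (2 * K + 1) (D1 (D1 (sa n))) = D1 (D1 (D (2 * K + 1) (sa n))) := by
  rcases n with _ | n
  · simp [sa]
  · rw [D_a, ← DB1_eq, ← b2, D, mkDerivation_X]
    simp only []
    rw [if_neg (by decide), if_neg (by decide)]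
    rfl

theorem D_rec (K n : ℕ) : D (2 * (K + 1) + 1) (sa n) = D (2 * K + 1) (sa (n + 1)) +
    (D1 (sa (K + 1)) * sa n - sa (K + 1) * D1 (sa n)) := by
  rw [D_a, D_a, Finset.sum_range_succ]
  congr 1
  · refine Finset.sum_congr rfl fun t _ => ?_
    rw [show n + (K + 1) - t = n + 1 + K - t by omega]
  · rw [show n + (K + 1) - (K + 1) = n by omega]

theorem der_comm (E F : Derivation ℂ R R)
    (h : ∀ n, E (F (sa n)) = F (E (sa n)) ∧ E (F (D1 (sa n))) = F (E (D1 (sa n)))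
      ∧ E (F (D1 (D1 (sa n)))) = F (E (D1 (D1 (sa n))))) (P : R) : E (F P) = F (E P) := by
  have : ⁅E, F⁆ = 0 := by
    refine MvPolynomial.derivation_ext fun p => ?_
    obtain ⟨i, m, hm⟩ := p
    obtain ⟨n, rfl⟩ := Nat.exists_eq_succ_of_ne_zero hm.ne'
    rw [Derivation.commutator_apply, Derivation.zero_apply, sub_eq_zero]
    have := h (n + 1)
    rw [← b2, sa, D1_0] at this
    fin_cases i
    · exact this.1
    · exact this.2.1
    · exact this.2.2
  have := congrArg (fun G : Derivation ℂ R R => G P) this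
  simpa [Derivation.commutator_apply, sub_eq_zero] using this

theorem comm_D1 (K : ℕ) (P : R) : D (2 * K + 1) (D1 P) = D1 (D (2 * K + 1) P) := by
  refine der_comm _ _ (fun n => ⟨D_a1 K n, ?_, ?_⟩) P
  · rw [D_a2, D_a1]
  · rw [D_a2]
    exact third sa D1 (fun K => D (2 * K + 1)) rfl (fun n => by simpa using D_a 0 n) D_rec D1_2 D_a1 K n

/-- For all odd natural numbers `k` and `l`, the derivations `D_k` and `D_l`
commute: for every polynomial `P` in `R` one has `D_k(D_l(P)) = D_l(D_k(P))`. -/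
theorem commute_Dk_Dl (k l : ℕ) (hk : Odd k) (hl : Odd l) :
    ∀ P : R, D k (D l P) = D l (D k P) := by
  obtain ⟨K, rfl⟩ := hk
  obtain ⟨L, rfl⟩ := hl
  have key : ∀ n, D (2 * K + 1) (D (2 * L + 1) (sa n)) = D (2 * L + 1) (D (2 * K + 1) (sa n)) :=
    fun n => comm_a sa D1 (fun K => D (2 * K + 1)) rfl (fun n => by simpa using D_a 0 n) D_rec D_a1 K L n
  refine der_comm _ _ fun n => ⟨key n, ?_, ?_⟩
  · simp only [comm_D1, key]
  · simp only [comm_D1, key]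
end

section
/- For every odd natural number k, D_k(b_{2,1}) = b_{3,k}; equivalently, together with the formula for D_k(b_{2,j}), the sum identity Σ_{s=1}^{(k-1)/2} b_{3,2s-1} b_{1,k-2s} = Σ_{s=1}^{(k-1)/2} b_{1,2s-1} b_{3,k-2s} holds in R. -/
open MvPolynomial Finset

/-- Reflection of the summation index. -/
theorem sum_reflect_aux (k : ℕ) (hk : Odd k) (p q : Fin 3) :
    ∑ s ∈ Finset.Icc 1 ((k - 1) / 2), b p (2 * s - 1) * b q (k - 2 * s)
      = ∑ s ∈ Finset.Icc 1 ((k - 1) / 2), b q (2 * s - 1) * b p (k - 2 * s) := by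
  obtain ⟨m, rfl⟩ := hk
  refine Finset.sum_nbij' (fun s => m + 1 - s) (fun s => m + 1 - s) ?_ ?_ ?_ ?_ ?_
  · intro s hs
    simp only [Finset.mem_Icc] at hs ⊢
    omega
  · intro s hs
    simp only [Finset.mem_Icc] at hs ⊢
    omega
  · intro s hs
    simp only [Finset.mem_Icc] at hs
    omega
  · intro s hs
    simp only [Finset.mem_Icc] at hs
    omega
  · intro s hs
    simp only [Finset.mem_Icc] at hs
    have h1 : 2 * (m + 1 - s) - 1 = 2 * m + 1 - 2 * s := by omega
    have h2 : 2 * m + 1 - 2 * (m + 1 - s) = 2 * s - 1 := by omega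
    rw [h1, h2, mul_comm]

theorem DB1_one_aux (k : ℕ) (hk : Odd k) : DB1 k 1 = b 1 k := by
  have h : ∀ s, 1 + k - 2 * s - 1 = k - 2 * s := fun s => by omega
  have h0 : 1 + k - 1 = k := by omega
  simp only [DB1, h, h0, Finset.sum_sub_distrib]
  rw [sum_reflect_aux k hk 1 0, sub_self, add_zero]

theorem D1_b1_aux (k : ℕ) (hk : Odd k) : D1 (b 1 k) = b 2 k := by
  obtain ⟨m, rfl⟩ := hk
  have h : 2 * ((2 * m + 1) / 2 + 1) - 1 = 2 * m + 1 := by omega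
  refine (MvPolynomial.mkDerivation_X ℂ _ _).trans ?_
  simp [h]

/-- For every odd `k`, `D_k(b_{2,1}) = b_{3,k}`; equivalently the sum identity
`Σ_{s=1}^{(k-1)/2} b_{3,2s-1} b_{1,k-2s} = Σ_{s=1}^{(k-1)/2} b_{1,2s-1} b_{3,k-2s}` in `R`. -/
theorem Dk_b21 (k : ℕ) (hk : Odd k) :
    D k (b 1 1) = b 2 k ∧
    ∑ s ∈ Finset.Icc 1 ((k - 1) / 2), b 2 (2 * s - 1) * b 0 (k - 2 * s)
      = ∑ s ∈ Finset.Icc 1 ((k - 1) / 2), b 0 (2 * s - 1) * b 2 (k - 2 * s) := by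
  refine ⟨?_, sum_reflect_aux k hk 2 0⟩
  have h : D k (b 1 1) = D1 (DB1 k 1) := by
    refine (MvPolynomial.mkDerivation_X ℂ _ _).trans ?_
    simp
  rw [h, DB1_one_aux k hk, D1_b1_aux k hk]
end

section
/- For all odd natural numbers k and j, the following explicit formula holds: D_k(b_{2,j}) = b_{3,j+k-1} + Σ_{s=1}^{(k-1)/2} (b_{3,2s-1} b_{1,j+k-2s-1} − b_{1,2s-1} b_{3,j+k-2s-1}). -/
open MvPolynomial Finset

theorem b_norm (i : Fin 3) (j : ℕ) : b i (2 * (j / 2 + 1) - 1) = b i j := by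
  unfold b
  have h : (2 * (j / 2 + 1) - 1) / 2 = j / 2 := by omega
  simp only [h]

theorem D1_b0 (j : ℕ) : D1 (b 0 j) = b 1 j := by
  rw [← b_norm 1 j]
  exact (MvPolynomial.mkDerivation_X ℂ _ _).trans (by simp)

theorem D1_b1 (j : ℕ) : D1 (b 1 j) = b 2 j := by
  rw [← b_norm 2 j]
  exact (MvPolynomial.mkDerivation_X ℂ _ _).trans (by simp)

theorem D_b1 (k j : ℕ) (hj : Odd j) : D k (b 1 j) = D1 (DB1 k j) := by
  have h : 2 * (j / 2 + 1) - 1 = j := by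
    obtain ⟨m, rfl⟩ := hj
    omega
  unfold D
  rw [b, MvPolynomial.mkDerivation_X]
  simp [h]

/-- explicit formula for `D_k(b_{2,j})` for odd `k`, `j`. -/
theorem Dk_b2j (k j : ℕ) (hk : Odd k) (hj : Odd j) :
    D k (b 1 j) = b 2 (j + k - 1)
      + ∑ s ∈ Finset.Icc 1 ((k - 1) / 2),
          (b 2 (2 * s - 1) * b 0 (j + k - 2 * s - 1)
            - b 0 (2 * s - 1) * b 2 (j + k - 2 * s - 1)) := by
  rw [D_b1 k j hj, DB1, map_add, map_sum, D1_b1]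
  congr 1
  refine Finset.sum_congr rfl fun s _ => ?_
  simp only [map_sub, Derivation.leibniz, D1_b0, D1_b1, smul_eq_mul]
  ring
end

section
/- For all odd natural numbers k, l and every odd j ≥ 1, the derivations commute on the generators of the first family: D_k(D_l(b_{1,j})) = D_l(D_k(b_{1,j})). -/
open MvPolynomial Finset

lemma D_b0 (k n : ℕ) : D k (b 0 (2 * n + 1)) = DB1 k (2 * n + 1) := by
  have h : 2 * ((2 * n + 1) / 2 + 1) - 1 = 2 * n + 1 := by omega
  simp only [D, b, mkDerivation_X, PNat.mk_coe, h]
  simp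

lemma D_b1_s7 (k n : ℕ) : D k (b 1 (2 * n + 1)) = D1 (D k (b 0 (2 * n + 1))) := by
  rw [D_b0]
  have h : 2 * ((2 * n + 1) / 2 + 1) - 1 = 2 * n + 1 := by omega
  simp only [D, b, mkDerivation_X, PNat.mk_coe, h]
  simp

lemma D1_gen (i : Fin 3) (n : ℕ) : D1 (b i (2 * n + 1)) =
    if i = 0 then b 1 (2 * n + 1)
    else if i = 1 then b 2 (2 * n + 1)
    else 4 * (2 * b 0 1 * b 1 (2 * n + 1) + b 1 1 * b 0 (2 * n + 1) + b 1 (2 * n + 1 + 2)) := by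
  have h : 2 * ((2 * n + 1) / 2 + 1) - 1 = 2 * n + 1 := by omega
  have hb : b i (2 * n + 1) = X (i, ⟨(2 * n + 1) / 2 + 1, Nat.succ_pos _⟩) := rfl
  rw [hb, D1, mkDerivation_X]
  simp only [PNat.mk_coe, h]

lemma D1_b0_s7 (n : ℕ) : D1 (b 0 (2 * n + 1)) = b 1 (2 * n + 1) := by
  rw [D1_gen]
  simp

lemma D1_b1_s7 (n : ℕ) : D1 (b 1 (2 * n + 1)) = b 2 (2 * n + 1) := by
  rw [D1_gen]
  simp

lemma DB1_one (j : ℕ) : DB1 1 j = b 1 j := by simp [DB1]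

lemma D_one : D 1 = D1 := by
  apply MvPolynomial.derivation_ext
  rintro ⟨i, m⟩
  obtain ⟨n, hn⟩ : ∃ n, (m : ℕ) = n + 1 := ⟨(m : ℕ) - 1, by have := m.pos; omega⟩
  have hb : (X (i, m) : R) = b i (2 * n + 1) := by
    have : m = ⟨(2 * n + 1) / 2 + 1, Nat.succ_pos _⟩ := by
      apply PNat.eq
      rw [PNat.mk_coe]
      omega
    rw [this]
    rfl
  have hj : 2 * (m : ℕ) - 1 = 2 * n + 1 := by omega
  have hD : D 1 (X (i, m)) = if i = 0 then DB1 1 (2 * n + 1)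
      else if i = 1 then D1 (DB1 1 (2 * n + 1)) else D1 (D1 (DB1 1 (2 * n + 1))) := by
    rw [D, mkDerivation_X]
    simp only [hj]
  rw [hD, hb, D1_gen, DB1_one, D1_b1_s7, D1_gen]
  simp

/-- The Wronskian-type expression governing the recurrence in `k`. -/
noncomputable def ww (q n : ℕ) : R :=
  b 1 (2 * q + 1) * b 0 (2 * n + 1) - b 0 (2 * q + 1) * b 1 (2 * n + 1)

lemma recX (q n : ℕ) : D (2 * (q + 1) + 1) (b 0 (2 * n + 1)) =
    D (2 * q + 1) (b 0 (2 * (n + 1) + 1)) + ww q n := by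
  rw [D_b0, D_b0, DB1, DB1, ww]
  have e1 : (2 * (q + 1) + 1 - 1) / 2 = q + 1 := by omega
  have e2 : (2 * q + 1 - 1) / 2 = q := by omega
  rw [e1, e2, Finset.sum_Icc_succ_top (by omega)]
  have e3 : 2 * n + 1 + (2 * (q + 1) + 1) - 2 * (q + 1) - 1 = 2 * n + 1 := by omega
  have e4 : 2 * (q + 1) - 1 = 2 * q + 1 := by omega
  have e5 : 2 * n + 1 + (2 * (q + 1) + 1) = 2 * (n + 1) + 1 + (2 * q + 1) := by omega
  rw [e3, e4, e5]
  ring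

lemma recY (q n : ℕ) : D (2 * (q + 1) + 1) (b 1 (2 * n + 1)) =
    D (2 * q + 1) (b 1 (2 * (n + 1) + 1)) + D1 (ww q n) := by
  rw [D_b1_s7, D_b1_s7, recX, map_add]

lemma D1_ww (q n : ℕ) : D1 (ww q n) =
    b 2 (2 * q + 1) * b 0 (2 * n + 1) - b 0 (2 * q + 1) * b 2 (2 * n + 1) := by
  simp only [ww, map_sub, Derivation.leibniz, D1_b0_s7, D1_b1_s7, smul_eq_mul]
  ring

lemma symX_aux (p : ℕ) : ∀ q, D (2 * p + 1) (b 0 (2 * q + 1)) - D (2 * q + 1) (b 0 (2 * p + 1)) =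
    D (2 * 0 + 1) (b 0 (2 * (p + q) + 1)) - D (2 * (p + q) + 1) (b 0 (2 * 0 + 1)) := by
  induction p with
  | zero => intro q; simp
  | succ p ih =>
    intro q
    have h := ih (q + 1)
    have h1 := recX p q
    have h2 := recX q p
    have e : p + 1 + q = p + (q + 1) := by omega
    have h3 : ww p q = - ww q p := by simp only [ww]; ring
    rw [e, ← h, h1, h2, h3]
    ring

lemma symX (p q : ℕ) : D (2 * p + 1) (b 0 (2 * q + 1)) = D (2 * q + 1) (b 0 (2 * p + 1)) := by
  have h1 := symX_aux p q
  have h2 := symX_aux q p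
  rw [add_comm q p, ← h1] at h2
  have h3 : (2 : R) * (D (2 * p + 1) (b 0 (2 * q + 1)) - D (2 * q + 1) (b 0 (2 * p + 1))) = 0 := by
    linear_combination -h2
  rcases mul_eq_zero.mp h3 with h | h
  · exact absurd h two_ne_zero
  · exact sub_eq_zero.mp h

lemma symY (p q : ℕ) : D (2 * p + 1) (b 1 (2 * q + 1)) = D (2 * q + 1) (b 1 (2 * p + 1)) := by
  rw [D_b1_s7, D_b1_s7, symX]

lemma D_ww (k q n : ℕ) : D k (ww q n) =
    D k (b 1 (2 * q + 1)) * b 0 (2 * n + 1) + b 1 (2 * q + 1) * D k (b 0 (2 * n + 1))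
    - D k (b 0 (2 * q + 1)) * b 1 (2 * n + 1) - b 0 (2 * q + 1) * D k (b 1 (2 * n + 1)) := by
  simp only [ww, map_sub, Derivation.leibniz, smul_eq_mul]
  ring

lemma key (p q n : ℕ) :
    D (2 * (p + 1) + 1) (ww q n) - D (2 * p + 1) (ww q (n + 1)) =
    D (2 * (q + 1) + 1) (ww p n) - D (2 * q + 1) (ww p (n + 1)) := by
  have hX := symX p (q + 1)
  have hY := symY p (q + 1)
  simp only [D_ww]
  rw [recX p q, recY p q, recX p n, recY p n, recX q n, recY q n, symX p q, symY p q, hX, hY]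
  simp only [D1_ww]
  simp only [ww]
  ring

lemma comm_zero (q n : ℕ) : D (2 * 0 + 1) (D (2 * q + 1) (b 0 (2 * n + 1))) =
    D (2 * q + 1) (D (2 * 0 + 1) (b 0 (2 * n + 1))) := by
  rw [mul_zero, zero_add, D_one, D1_b0_s7, D_b1_s7]

lemma comm_all (p : ℕ) : ∀ q n, D (2 * p + 1) (D (2 * q + 1) (b 0 (2 * n + 1))) =
    D (2 * q + 1) (D (2 * p + 1) (b 0 (2 * n + 1))) := by
  induction p with
  | zero => exact comm_zero
  | succ p ihp =>
    intro q
    induction q with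
    | zero => intro n; exact (comm_zero (p + 1) n).symm
    | succ q ihq =>
      intro n
      have h1 := ihp (q + 1) (n + 1)
      have h2 := ihq (n + 1)
      have h3 := ihp q (n + 1 + 1)
      have hk := key p q n
      rw [recX q (n + 1), map_add] at h1
      rw [recX p (n + 1), map_add] at h2
      rw [recX q n, recX p n, map_add, map_add]
      linear_combination h1 + h2 - h3 + hk

/-- `D_k` and `D_l` commute on the generators `b_{1,j}` for odd `k`, `l`, `j`. -/
theorem commute_on_b1 (k l j : ℕ) (hk : Odd k) (hl : Odd l) (hj : Odd j) :
    D k (D l (b 0 j)) = D l (D k (b 0 j)) := by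
  obtain ⟨p, rfl⟩ := hk
  obtain ⟨q, rfl⟩ := hl
  obtain ⟨n, rfl⟩ := hj
  exact comm_all p q n
end

section
/- For all odd natural numbers j, k, l, the following expression is symmetric in k and l, i.e. the identity Σ_{s=1}^{(k-1)/2} b_{2,2s-1} b_{2,j+k+l-2s-2} − Σ_{s=1}^{(k-1)/2} b_{2,j+k-2s-1} b_{2,2s+l-2} = Σ_{s=1}^{(l-1)/2} b_{2,2s-1} b_{2,j+k+l-2s-2} − Σ_{s=1}^{(l-1)/2} b_{2,j+l-2s-1} b_{2,2s+k-2} holds in R. -/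
open MvPolynomial Finset

/-- for all odd `j`, `k`, `l`, the expression
`Σ_{s=1}^{(k-1)/2} b_{2,2s-1} b_{2,j+k+l-2s-2} − Σ_{s=1}^{(k-1)/2} b_{2,j+k-2s-1} b_{2,2s+l-2}`
is symmetric in `k` and `l`. -/
theorem identity11 (j k l : ℕ) (hj : Odd j) (hk : Odd k) (hl : Odd l) :
    ∑ s ∈ Finset.Icc 1 ((k - 1) / 2), b 1 (2 * s - 1) * b 1 (j + k + l - 2 * s - 2)
      - ∑ s ∈ Finset.Icc 1 ((k - 1) / 2), b 1 (j + k - 2 * s - 1) * b 1 (2 * s + l - 2)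
    = ∑ s ∈ Finset.Icc 1 ((l - 1) / 2), b 1 (2 * s - 1) * b 1 (j + k + l - 2 * s - 2)
      - ∑ s ∈ Finset.Icc 1 ((l - 1) / 2), b 1 (j + l - 2 * s - 1) * b 1 (2 * s + k - 2) := by
  obtain ⟨c, rfl⟩ := hj
  obtain ⟨p, rfl⟩ := hk
  obtain ⟨q, rfl⟩ := hl
  have key : ∀ n : ℕ, ∀ g : ℕ → R,
      ∑ s ∈ Finset.Icc 1 n, g s = ∑ i ∈ Finset.range n, g (i + 1) := by
    intro n g
    rw [Finset.range_eq_Ico, Finset.sum_Ico_add' g 0 n 1]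
    rfl
  have hd : ∀ n : ℕ, (2 * n + 1 - 1) / 2 = n := by intro n; omega
  simp only [hd, key]
  set f : ℕ → R := fun i => b 1 (2 * i + 1) * b 1 (2 * (c + p + q - 1 - i) + 1) with hf
  have h1 : ∀ n : ℕ, n ≤ p + q → ∑ i ∈ Finset.range n, b 1 (2 * (i + 1) - 1) *
      b 1 (2 * c + 1 + (2 * p + 1) + (2 * q + 1) - 2 * (i + 1) - 2)
      = ∑ i ∈ Finset.range n, f i := by
    intro n hn
    refine Finset.sum_congr rfl fun i hi => ?_
    rw [Finset.mem_range] at hi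
    simp only [hf]
    congr 2 <;> omega
  have h2 : ∀ n m : ℕ, n + m = p + q → ∑ i ∈ Finset.range n,
      b 1 (2 * c + 1 + (2 * n + 1) - 2 * (i + 1) - 1) * b 1 (2 * (i + 1) + (2 * m + 1) - 2)
      = ∑ i ∈ Finset.range n, f (m + i) := by
    intro n m hn
    refine Finset.sum_congr rfl fun i hi => ?_
    rw [Finset.mem_range] at hi
    simp only [hf]
    rw [mul_comm]
    congr 2 <;> omega
  rw [h1 p (by omega), h1 q (by omega), h2 p q rfl, h2 q p (by omega)]
  have e1 := Finset.sum_range_add f p q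
  have e2 := Finset.sum_range_add f q p
  rw [add_comm q p, e1] at e2
  linear_combination e2
end

section
/- For odd natural numbers j, k, l define E(k,l) ∈ R by E(k,l) = Σ_{s=1}^{(k-1)/2} b_{1,j+k-2s-1} Σ_{n=1}^{(l-1)/2} b_{3,2n-1} b_{1,2s+l-2n-2} − Σ_{s=1}^{(k-1)/2} b_{1,j+k-2s-1} Σ_{n=1}^{(l-1)/2} b_{1,2n-1} b_{3,2s+l-2n-2} − Σ_{s=1}^{(k-1)/2} b_{1,2s-1} Σ_{n=1}^{(l-1)/2} b_{3,2n-1} b_{1,j+k+l-2s-2n-2}. Then E(k,l) = E(l,k) for all odd k, l. -/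
open MvPolynomial Finset

noncomputable section

/-- The expression `E(k,l)` (for a fixed odd `j`) from STATEMENT 12. -/
def E (j k l : ℕ) : R :=
  ∑ s ∈ Finset.Icc 1 ((k - 1) / 2), b 0 (j + k - 2 * s - 1)
      * ∑ n ∈ Finset.Icc 1 ((l - 1) / 2), b 2 (2 * n - 1) * b 0 (2 * s + l - 2 * n - 2)
  - ∑ s ∈ Finset.Icc 1 ((k - 1) / 2), b 0 (j + k - 2 * s - 1)
      * ∑ n ∈ Finset.Icc 1 ((l - 1) / 2), b 0 (2 * n - 1) * b 2 (2 * s + l - 2 * n - 2)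
  - ∑ s ∈ Finset.Icc 1 ((k - 1) / 2), b 0 (2 * s - 1)
      * ∑ n ∈ Finset.Icc 1 ((l - 1) / 2), b 2 (2 * n - 1) * b 0 (j + k + l - 2 * s - 2 * n - 2)

end

lemma sum_triple {A : Type*} [CommRing A] (K L : ℕ) (f : ℕ → ℕ → ℕ → A) :
    ∑ s ∈ range K, ∑ n ∈ range L, f s n (K + L - 2 - s - n) =
    ∑ s ∈ range (K + L), ∑ n ∈ range (K + L), ∑ m ∈ range (K + L),
      if s < K ∧ n < L ∧ s + n + m + 2 = K + L then f s n m else 0 := by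
  have h1 : range K ⊆ range (K + L) := by
    intro x hx; simp only [mem_range] at *; omega
  have h2 : range L ⊆ range (K + L) := by
    intro x hx; simp only [mem_range] at *; omega
  rw [← Finset.sum_subset h1]
  · refine Finset.sum_congr rfl fun s hs => ?_
    rw [← Finset.sum_subset h2]
    · refine Finset.sum_congr rfl fun n hn => ?_
      simp only [mem_range] at hs hn
      rw [Finset.sum_eq_single (K + L - 2 - s - n)]
      · rw [if_pos]; omega
      · intro m _ hm
        rw [if_neg]; omega
      · intro h
        simp only [mem_range] at h
        omega
    · intro n _ hn
      refine Finset.sum_eq_zero fun m _ => ?_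
      simp only [mem_range] at hn
      rw [if_neg]; omega
  · intro s _ hs
    refine Finset.sum_eq_zero fun n _ => Finset.sum_eq_zero fun m _ => ?_
    simp only [mem_range] at hs
    rw [if_neg]; omega

/-- Normal form of `E` as a sum over triples. -/
lemma E_triple (J K L : ℕ) : E (2 * J + 1) (2 * K + 1) (2 * L + 1) =
    ∑ p ∈ range (K + L), ∑ q ∈ range (K + L), ∑ r ∈ range (K + L),
      ((if p < K ∧ r < L ∧ p + r + q + 2 = K + L then
          b 0 (2 * (J + p) + 1) * (b 2 (2 * r + 1) * b 0 (2 * q + 1)) else 0)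
      - (if p < K ∧ q < L ∧ p + q + r + 2 = K + L then
          b 0 (2 * (J + p) + 1) * (b 0 (2 * q + 1) * b 2 (2 * r + 1)) else 0)
      - (if q < K ∧ r < L ∧ q + r + p + 2 = K + L then
          b 0 (2 * q + 1) * (b 2 (2 * r + 1) * b 0 (2 * (J + p) + 1)) else 0)) := by
  have hI : ∀ (M : ℕ) (g : ℕ → R), ∑ s ∈ Icc 1 ((2 * M + 1 - 1) / 2), g s =
      ∑ s ∈ range M, g (s + 1) := by
    intro M g
    have : (2 * M + 1 - 1) / 2 = M := by omega
    rw [this, Finset.range_eq_Ico, Finset.sum_Ico_add' g 0 M 1]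
    rfl
  simp only [Finset.sum_sub_distrib]
  unfold E
  simp only [hI, Finset.mul_sum]
  congr 1
  · congr 1
    · rw [← Finset.sum_range_reflect]
      have e := sum_triple K L (fun p r q =>
        b 0 (2 * (J + p) + 1) * (b 2 (2 * r + 1) * b 0 (2 * q + 1)))
      refine Eq.trans ?_ (e.trans (Finset.sum_congr rfl fun p _ => Finset.sum_comm))
      refine Finset.sum_congr rfl fun s hs => Finset.sum_congr rfl fun n hn => ?_
      simp only [mem_range] at hs hn
      congr 2
      · omega
      · congr 1; omega
    · rw [← Finset.sum_range_reflect]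
      refine Eq.trans ?_ (sum_triple K L (fun p q r =>
        b 0 (2 * (J + p) + 1) * (b 0 (2 * q + 1) * b 2 (2 * r + 1))))
      refine Finset.sum_congr rfl fun s hs => Finset.sum_congr rfl fun n hn => ?_
      simp only [mem_range] at hs hn
      congr 2
      · omega
      · congr 1; omega
  · have e := sum_triple K L (fun q r p =>
        b 0 (2 * q + 1) * (b 2 (2 * r + 1) * b 0 (2 * (J + p) + 1)))
    refine Eq.trans ?_ (e.trans ?_)
    · refine Finset.sum_congr rfl fun s hs => Finset.sum_congr rfl fun n hn => ?_
      simp only [mem_range] at hs hn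
      congr 3
      omega
    · rw [Finset.sum_comm' (t' := range (K + L)) (s' := fun _ => range (K + L)) (by simp)]
      rw [Finset.sum_comm]
      conv_rhs => rw [Finset.sum_comm]
      exact Finset.sum_congr rfl fun q _ => Finset.sum_comm

/-- `E(k,l) = E(l,k)` for all odd `j`, `k`, `l`. -/
theorem E_symm (j k l : ℕ) (hj : Odd j) (hk : Odd k) (hl : Odd l) :
    E j k l = E j l k := by
  obtain ⟨J, rfl⟩ := hj
  obtain ⟨K, rfl⟩ := hk
  obtain ⟨L, rfl⟩ := hl
  rw [E_triple, E_triple, Nat.add_comm L K]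
  refine Finset.sum_congr rfl fun p _ => Finset.sum_congr rfl fun q _ =>
    Finset.sum_congr rfl fun r _ => ?_
  generalize b 0 (2 * (J + p) + 1) = x
  generalize b 0 (2 * q + 1) = y
  generalize b 2 (2 * r + 1) = z
  split_ifs <;> first | (exfalso; omega) | ring
end

section
/- For odd natural numbers j, k, l define F(k,l) ∈ R by F(k,l) = Σ_{s=1}^{(k-1)/2} b_{2,j+k-2s-1} Σ_{n=1}^{(l-1)/2} b_{1,2n-1} b_{2,2s+l-2n-2} − Σ_{s=1}^{(k-1)/2} b_{2,j+k-2s-1} Σ_{n=1}^{(l-1)/2} b_{2,2n-1} b_{1,2s+l-2n-2} − Σ_{s=1}^{(k-1)/2} b_{2,2s-1} Σ_{n=1}^{(l-1)/2} b_{1,2n-1} b_{2,j+k+l-2s-2n-2}. Then F(k,l) = F(l,k) for all odd k, l. -/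
open MvPolynomial Finset

noncomputable section

/-- The expression `F(k,l)` (for a fixed odd `j`) from STATEMENT 13. -/
def F (j k l : ℕ) : R :=
  ∑ s ∈ Finset.Icc 1 ((k - 1) / 2), b 1 (j + k - 2 * s - 1)
      * ∑ n ∈ Finset.Icc 1 ((l - 1) / 2), b 0 (2 * n - 1) * b 1 (2 * s + l - 2 * n - 2)
  - ∑ s ∈ Finset.Icc 1 ((k - 1) / 2), b 1 (j + k - 2 * s - 1)
      * ∑ n ∈ Finset.Icc 1 ((l - 1) / 2), b 1 (2 * n - 1) * b 0 (2 * s + l - 2 * n - 2)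
  - ∑ s ∈ Finset.Icc 1 ((k - 1) / 2), b 1 (2 * s - 1)
      * ∑ n ∈ Finset.Icc 1 ((l - 1) / 2), b 0 (2 * n - 1) * b 1 (j + k + l - 2 * s - 2 * n - 2)

end

/-- Triples `(u,v,w)` with `u+v+w+2 = N`. -/
def triples (N : ℕ) : Finset (ℕ × ℕ × ℕ) :=
  (range N ×ˢ (range N ×ˢ range N)).filter fun p => p.1 + p.2.1 + p.2.2 + 2 = N

/-- The monomial attached to a triple. -/
noncomputable def mono3 (J : ℕ) (p : ℕ × ℕ × ℕ) : R :=
  b 1 (2 * (J + p.1) + 1) * b 0 (2 * p.2.1 + 1) * b 1 (2 * p.2.2 + 1)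

theorem F_eq (J K L N : ℕ) (hN : N = K + L) :
    F (2 * J + 1) (2 * K + 1) (2 * L + 1) =
      ∑ p ∈ triples N, ((if p.1 < K ∧ p.2.1 < L then mono3 J p else 0)
        - (if p.1 < K ∧ p.2.2 < L then mono3 J p else 0)
        - (if p.2.2 < K ∧ p.2.1 < L then mono3 J p else 0)) := by
  have hK : (2 * K + 1 - 1) / 2 = K := by omega
  have hL : (2 * L + 1 - 1) / 2 = L := by omega
  unfold F
  rw [hK, hL]
  simp only [Finset.mul_sum, Finset.sum_sub_distrib]
  simp only [← Finset.sum_filter, ← Finset.sum_product']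
  congr 1
  · congr 1
    · refine Finset.sum_nbij' (fun q => (K - q.1, q.2 - 1, q.1 + L - q.2 - 1))
        (fun p => (K - p.1, p.2.1 + 1)) ?_ ?_ ?_ ?_ ?_
      · rintro ⟨s, n⟩ h
        simp [triples] at h ⊢
        omega
      · rintro ⟨u, v, w⟩ h
        simp [triples] at h ⊢
        omega
      · rintro ⟨s, n⟩ h
        simp [triples] at h ⊢
        omega
      · rintro ⟨u, v, w⟩ h
        simp [triples] at h ⊢
        omega
      · rintro ⟨s, n⟩ h
        simp at h
        simp only [mono3]
        rw [show 2 * J + 1 + (2 * K + 1) - 2 * s - 1 = 2 * (J + (K - s)) + 1 by omega,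
          show 2 * n - 1 = 2 * (n - 1) + 1 by omega,
          show 2 * s + (2 * L + 1) - 2 * n - 2 = 2 * (s + L - n - 1) + 1 by omega]
        ring
    · refine Finset.sum_nbij' (fun q => (K - q.1, q.1 + L - q.2 - 1, q.2 - 1))
        (fun p => (K - p.1, p.2.2 + 1)) ?_ ?_ ?_ ?_ ?_
      · rintro ⟨s, n⟩ h
        simp [triples] at h ⊢
        omega
      · rintro ⟨u, v, w⟩ h
        simp [triples] at h ⊢
        omega
      · rintro ⟨s, n⟩ h
        simp [triples] at h ⊢
        omega
      · rintro ⟨u, v, w⟩ h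
        simp [triples] at h ⊢
        omega
      · rintro ⟨s, n⟩ h
        simp at h
        simp only [mono3]
        rw [show 2 * J + 1 + (2 * K + 1) - 2 * s - 1 = 2 * (J + (K - s)) + 1 by omega,
          show 2 * n - 1 = 2 * (n - 1) + 1 by omega,
          show 2 * s + (2 * L + 1) - 2 * n - 2 = 2 * (s + L - n - 1) + 1 by omega]
        ring
  · refine Finset.sum_nbij' (fun q => (K + L - q.1 - q.2, q.2 - 1, q.1 - 1))
      (fun p => (p.2.2 + 1, p.2.1 + 1)) ?_ ?_ ?_ ?_ ?_
    · rintro ⟨s, n⟩ h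
      simp [triples] at h ⊢
      omega
    · rintro ⟨u, v, w⟩ h
      simp [triples] at h ⊢
      omega
    · rintro ⟨s, n⟩ h
      simp [triples] at h ⊢
      omega
    · rintro ⟨u, v, w⟩ h
      simp [triples] at h ⊢
      omega
    · rintro ⟨s, n⟩ h
      simp at h
      simp only [mono3]
      rw [show 2 * J + 1 + (2 * K + 1) + (2 * L + 1) - 2 * s - 2 * n - 2
          = 2 * (J + (K + L - s - n)) + 1 by omega,
        show 2 * n - 1 = 2 * (n - 1) + 1 by omega,
        show 2 * s - 1 = 2 * (s - 1) + 1 by omega]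
      ring

/-- `F(k,l) = F(l,k)` for all odd `j`, `k`, `l`. -/
theorem F_symm (j k l : ℕ) (hj : Odd j) (hk : Odd k) (hl : Odd l) :
    F j k l = F j l k := by
  obtain ⟨J, rfl⟩ := hj
  obtain ⟨K, rfl⟩ := hk
  obtain ⟨L, rfl⟩ := hl
  rw [F_eq J K L (K + L) rfl, F_eq J L K (K + L) (add_comm _ _)]
  refine Finset.sum_congr rfl ?_
  rintro ⟨u, v, w⟩ h
  have h' : u + v + w + 2 = K + L := (Finset.mem_filter.mp h).2
  generalize mono3 J (u, v, w) = m
  simp only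
  by_cases h1 : u < K <;> by_cases h2 : u < L <;> by_cases h3 : v < K <;>
    by_cases h4 : v < L <;> by_cases h5 : w < K <;> by_cases h6 : w < L <;>
    first
    | (exfalso; omega)
    | simp [h1, h2, h3, h4, h5, h6]
end
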